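/- Let α ∈ (0,1] and let μ = (μ₁, μ₂) ∈ ℝ² satisfy ‖μ‖₁ = |μ₁| + |μ₂| ≤ 1. Let P₀ = Lap_2(0, α⁻¹) be the centered bivariate Laplace distribution with independent coordinates, and let P_{±μ} = ½·Lap_2(μ, α⁻¹) + ½·Lap_2(−μ, α⁻¹). Then the chi-square divergence satisfies χ²(P_{±μ}, P₀) = ∫ (dP_{±μ}/dP₀ − 1)² dP₀ ≤ (e²α⁴/4)·‖μ‖₁⁴ + 2e²α³·‖μ‖₁³ ≤ 16.7 · α³ · ‖μ‖₁³. -/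

import Mathlib

open MeasureTheory Real
open scoped ENNReal

/-- The Laplace distribution on `ℝ` with mean `m` and scale parameter `b`. -/
noncomputable def Lap1' (m b : ℝ) : Measure ℝ :=
  volume.withDensity (fun x => ENNReal.ofReal ((2 * b)⁻¹ * Real.exp (-|x - m| / b)))

/-- The bivariate Laplace distribution with independent coordinates,
mean `(m₁, m₂)` and common scale `b`. -/
noncomputable def Lap2' (m₁ m₂ b : ℝ) : Measure (ℝ × ℝ) :=
  (Lap1' m₁ b).prod (Lap1' m₂ b)

/-!
Against a centered Laplace law, the chi-square divergence of a mixture is `∫ h² - 1`, where `h` is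
its likelihood ratio. For the symmetric two-point mixture, `∫ h²` is built from the correlations
of the likelihood ratios of the components; these factor over coordinates, and with
`t = |m| / b` they are, in one coordinate, `A(t) = ⅔ eᵗ + ⅓ e⁻²ᵗ` for the pair `(m, m)` and
`B(t) = 2 e⁻ᵗ - e⁻²ᵗ` for `(m, -m)`. Since `A(t) ≤ 1 + t² + t³` for `t ≤ 1` and
`B(t) ≤ 1 - t² + t³`, the quadratic terms cancel in the bound for `½ (A(s) A(t) + B(s) B(t)) - 1`,
which is thus at most `(s + t)³` when `s + t ≤ 1`.
-/

section ChiSquare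

variable {Ω : Type*} [MeasurableSpace Ω] {P Q ν : Measure Ω} {f g h : Ω → ℝ}

/-- The chi-square divergence `χ²(P, ν) = ∫ (dP/dν - 1)² dν`. It is the intended quantity only when
`P ≪ ν` and the density is square integrable: `rnDeriv` discards the singular part of `P`. -/
noncomputable def chiSqDiv (P ν : Measure Ω) : ℝ :=
  ∫ x, ((P.rnDeriv ν x).toReal - 1) ^ 2 ∂ν

lemma integral_eq_one_of_eq_withDensity [IsProbabilityMeasure P] (h₀ : 0 ≤ h)
    (hm : AEStronglyMeasurable h ν) (hP : P = ν.withDensity fun x ↦ ENNReal.ofReal (h x)) :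
    ∫ x, h x ∂ν = 1 := by
  rw [integral_eq_lintegral_of_nonneg_ae (.of_forall h₀) hm, ← setLIntegral_univ,
    ← withDensity_apply _ .univ, ← hP, measure_univ, ENNReal.toReal_one]

lemma chiSqDiv_eq_integral_sq_sub_one [IsProbabilityMeasure P] [IsProbabilityMeasure ν]
    (h₀ : 0 ≤ h) (hL : MemLp h 2 ν) (hP : P = ν.withDensity fun x ↦ ENNReal.ofReal (h x)) :
    chiSqDiv P ν = ∫ x, h x ^ 2 ∂ν - 1 := by
  have h_mean := integral_eq_one_of_eq_withDensity h₀ hL.1 hP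
  have h_deriv : P.rnDeriv ν =ᵐ[ν] fun x ↦ ENNReal.ofReal (h x) :=
    hP ▸ Measure.rnDeriv_withDensity₀ ν hL.1.aemeasurable.ennreal_ofReal
  calc chiSqDiv P ν = ∫ x, (h x - ∫ y, h y ∂ν) ^ 2 ∂ν := by
        rw [h_mean]
        refine integral_congr_ae ?_
        filter_upwards [h_deriv] with x hx
        rw [hx, ENNReal.toReal_ofReal (h₀ x)]
    _ = ∫ x, h x ^ 2 ∂ν - 1 := by
        rw [← ProbabilityTheory.variance_eq_integral hL.1.aemeasurable,
          ProbabilityTheory.variance_eq_sub hL, h_mean, one_pow]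
        rfl

lemma half_smul_withDensity_add_half_smul_withDensity (hf₀ : 0 ≤ f) (hg₀ : 0 ≤ g)
    (hf : AEMeasurable f ν) :
    (1 / 2 : ℝ≥0∞) • ν.withDensity (fun x ↦ ENNReal.ofReal (f x)) +
        (1 / 2 : ℝ≥0∞) • ν.withDensity (fun x ↦ ENNReal.ofReal (g x)) =
      ν.withDensity fun x ↦ ENNReal.ofReal ((f x + g x) / 2) := by
  have h_ofReal (x : Ω) : ENNReal.ofReal ((f x + g x) / 2) =
      1 / 2 * (ENNReal.ofReal (f x) + ENNReal.ofReal (g x)) := by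
    rw [← ENNReal.ofReal_add (hf₀ x) (hg₀ x), div_eq_inv_mul, ENNReal.ofReal_mul (by norm_num),
      ENNReal.ofReal_inv_of_pos two_pos, ENNReal.ofReal_ofNat, one_div]
  ext A hA
  simp only [Measure.add_apply, Measure.smul_apply, smul_eq_mul, withDensity_apply _ hA, h_ofReal]
  rw [lintegral_const_mul' _ _ (by norm_num), lintegral_add_left' hf.restrict.ennreal_ofReal,
    mul_add]

lemma isProbabilityMeasure_half_smul_add_half_smul [IsProbabilityMeasure P]
    [IsProbabilityMeasure Q] : IsProbabilityMeasure ((1 / 2 : ℝ≥0∞) • P + (1 / 2 : ℝ≥0∞) • Q) :=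
  ⟨by simp [ENNReal.inv_two_add_inv_two]⟩

lemma chiSqDiv_half_smul_add_half_smul [IsProbabilityMeasure P] [IsProbabilityMeasure Q]
    [IsProbabilityMeasure ν] (hf₀ : 0 ≤ f) (hg₀ : 0 ≤ g) (hf : MemLp f 2 ν) (hg : MemLp g 2 ν)
    (hP : P = ν.withDensity fun x ↦ ENNReal.ofReal (f x))
    (hQ : Q = ν.withDensity fun x ↦ ENNReal.ofReal (g x)) :
    chiSqDiv ((1 / 2 : ℝ≥0∞) • P + (1 / 2 : ℝ≥0∞) • Q) ν =
      (∫ x, f x * f x ∂ν + 2 * ∫ x, f x * g x ∂ν + ∫ x, g x * g x ∂ν) / 4 - 1 := by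
  have := isProbabilityMeasure_half_smul_add_half_smul (P := P) (Q := Q)
  have hL : MemLp (fun x ↦ (f x + g x) / 2) 2 ν := by
    simpa only [div_eq_inv_mul, Pi.add_apply] using (hf.add hg).const_mul 2⁻¹
  have h_mix := half_smul_withDensity_add_half_smul_withDensity hf₀ hg₀ hf.1.aemeasurable
  rw [← hP, ← hQ] at h_mix
  have h_ff : Integrable (fun x ↦ f x * f x) ν := hf.integrable_mul hf
  have h_fg : Integrable (fun x ↦ f x * g x) ν := hf.integrable_mul hg
  have h_gg : Integrable (fun x ↦ g x * g x) ν := hg.integrable_mul hg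
  have h_expand (x : Ω) :
      ((f x + g x) / 2) ^ 2 = (f x * f x + 2 * (f x * g x) + g x * g x) / 4 := by ring
  rw [chiSqDiv_eq_integral_sq_sub_one (fun x ↦ div_nonneg (add_nonneg (hf₀ x) (hg₀ x)) zero_le_two)
    hL h_mix]
  simp only [h_expand]
  rw [integral_div, integral_add (by fun_prop) h_gg, integral_add h_ff (by fun_prop),
    integral_const_mul]

end ChiSquare

section ExponentialIntegrals

variable {k l : ℝ}

lemma integrableOn_Ioi_exp_mul_sub_mul_abs_sub (hk : 0 ≤ k) (hl : l < k) (a c : ℝ) :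
    IntegrableOn (fun y ↦ exp (l * y - k * |y - c|)) (Set.Ioi a) := by
  refine ((integrableOn_exp_mul_Ioi (sub_neg.2 hl) a).const_mul (exp (k * c))).mono'
    (by fun_prop) (.of_forall fun y ↦ ?_)
  rw [norm_of_nonneg (exp_pos _).le, ← exp_add]
  gcongr
  linarith [mul_le_mul_of_nonneg_left (le_abs_self (y - c)) hk]

lemma integral_Ioi_exp_mul_sub_mul_abs_sub (h : |l| < k) {c : ℝ} (hc : 0 ≤ c) :
    ∫ y in Set.Ioi 0, exp (l * y - k * |y - c|) =
      (exp (l * c) - exp (-(k * c))) / (l + k) + exp (l * c) / (k - l) := by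
  obtain ⟨h_neg, hl⟩ := abs_lt.1 h
  have hk : 0 ≤ k := (abs_nonneg l).trans h.le
  have h_add : l + k ≠ 0 := by linarith
  have h_left : ∫ y in 0..c, exp (l * y - k * |y - c|) =
      (exp (l * c) - exp (-(k * c))) / (l + k) := by
    calc ∫ y in 0..c, exp (l * y - k * |y - c|)
        = ∫ y in 0..c, exp (-(k * c)) * exp ((l + k) * y) := by
          refine intervalIntegral.integral_congr fun y hy ↦ ?_
          rw [Set.uIcc_of_le hc] at hy
          simp only [abs_of_nonpos (sub_nonpos.2 hy.2), ← exp_add]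
          ring_nf
      _ = (exp (l * c) - exp (-(k * c))) / (l + k) := by
          rw [intervalIntegral.integral_const_mul, intervalIntegral.integral_comp_mul_left _ h_add,
            integral_exp, mul_zero, exp_zero, smul_eq_mul, add_mul, exp_add, exp_neg]
          field_simp
  have h_right : ∫ y in Set.Ioi c, exp (l * y - k * |y - c|) = exp (l * c) / (k - l) := by
    calc ∫ y in Set.Ioi c, exp (l * y - k * |y - c|)
        = ∫ y in Set.Ioi c, exp (k * c) * exp ((l - k) * y) := by
          refine setIntegral_congr_fun measurableSet_Ioi fun y hy ↦ ?_
          simp only [abs_of_pos (sub_pos.2 (Set.mem_Ioi.1 hy)), ← exp_add]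
          ring_nf
      _ = exp (l * c) / (k - l) := by
          rw [integral_const_mul, integral_exp_mul_Ioi (sub_neg.2 hl), ← neg_sub l k, div_neg,
            neg_div, mul_neg, mul_div_assoc', ← exp_add]
          ring_nf
  rw [← h_left, ← h_right, intervalIntegral.integral_interval_add_Ioi] <;>
    exact integrableOn_Ioi_exp_mul_sub_mul_abs_sub hk hl _ c

lemma integral_exp_abs_sub_two_mul_abs_sub {c : ℝ} (hc : 0 ≤ c) :
    ∫ y, exp (|y| - 2 * |y - c|) = 4 / 3 * exp c + 2 / 3 * exp (-2 * c) := by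
  have h_left : Set.EqOn (fun y ↦ exp (|y| - 2 * |y - c|)) (fun y ↦ exp (-2 * c) * exp y)
      (Set.Iic 0) := fun y (hy : y ≤ 0) ↦ by
    simp only [abs_of_nonpos hy, abs_of_nonpos (show y - c ≤ 0 by linarith), ← exp_add]
    ring_nf
  have h_right : Set.EqOn (fun y ↦ exp (|y| - 2 * |y - c|)) (fun y ↦ exp (1 * y - 2 * |y - c|))
      (Set.Ioi 0) := fun y (hy : 0 < y) ↦ by
    simp only [abs_of_pos hy, one_mul]
  have h_int_left := (integrableOn_congr_fun h_left measurableSet_Iic).2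
    ((integrableOn_exp_Iic 0).const_mul _)
  have h_int_right := (integrableOn_congr_fun h_right measurableSet_Ioi).2
    (integrableOn_Ioi_exp_mul_sub_mul_abs_sub zero_le_two one_lt_two 0 c)
  rw [← intervalIntegral.integral_Iic_add_Ioi h_int_left h_int_right,
    setIntegral_congr_fun measurableSet_Iic h_left,
    setIntegral_congr_fun measurableSet_Ioi h_right,
    integral_const_mul, integral_exp_Iic_zero,
    integral_Ioi_exp_mul_sub_mul_abs_sub (by norm_num) hc]
  ring_nf

lemma integral_exp_abs_sub_abs_sub_sub_abs_add {c : ℝ} (hc : 0 ≤ c) :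
    ∫ y, exp (|y| - |y - c| - |y + c|) = 2 * (2 * exp (-c) - exp (-2 * c)) := by
  have h_even (y : ℝ) : |y| - |y - c| - |y + c| = |y| - |(|y| - c)| - |(|y| + c)| := by
    rcases abs_choice y with hy | hy
    · rw [hy]
    · rw [hy, ← neg_add' y c, abs_neg, neg_add_eq_sub y c, abs_sub_comm c y, sub_right_comm]
  have h_right : Set.EqOn (fun y ↦ exp (y - |y - c| - |y + c|))
      (fun y ↦ exp (-c) * exp (0 * y - 1 * |y - c|)) (Set.Ioi 0) := fun y (hy : 0 < y) ↦ by
    simp only [abs_of_pos (show 0 < y + c by linarith), ← exp_add]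
    ring_nf
  simp only [h_even]
  rw [integral_comp_abs (f := fun y ↦ exp (y - |y - c| - |y + c|)),
    setIntegral_congr_fun measurableSet_Ioi h_right, integral_const_mul,
    integral_Ioi_exp_mul_sub_mul_abs_sub (by norm_num) hc,
    show exp (-2 * c) = exp (-c) * exp (-c) by rw [← exp_add]; ring_nf]
  norm_num
  ring

end ExponentialIntegrals

section Laplace

variable {b : ℝ}

/-- The likelihood ratio of `Lap1' m b` with respect to `Lap1' 0 b`. -/
noncomputable def laplaceRatio (b m x : ℝ) : ℝ := exp ((|x| - |x - m|) / b)

lemma laplaceRatio_pos (b m x : ℝ) : 0 < laplaceRatio b m x := exp_pos _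

@[fun_prop]
lemma measurable_laplaceRatio (b m : ℝ) : Measurable (laplaceRatio b m) := by
  unfold laplaceRatio
  fun_prop

lemma laplaceRatio_le (hb : 0 ≤ b) (m x : ℝ) : laplaceRatio b m x ≤ exp (|m| / b) := by
  have h : |x| - |x - m| ≤ |m| := by simpa using abs_sub_abs_le_abs_sub x (x - m)
  unfold laplaceRatio
  gcongr

lemma Lap1'_eq_withDensity_laplaceRatio (b m : ℝ) :
    Lap1' m b = (Lap1' 0 b).withDensity fun x ↦ ENNReal.ofReal (laplaceRatio b m x) := by
  unfold Lap1'
  rw [← withDensity_mul _ (by fun_prop) (by fun_prop)]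
  congr with x
  rw [Pi.mul_apply, ← ENNReal.ofReal_mul' (laplaceRatio_pos b m x).le, laplaceRatio, mul_assoc,
    ← exp_add, sub_zero]
  ring_nf

lemma integral_Lap1' (hb : 0 < b) (m : ℝ) (f : ℝ → ℝ) :
    ∫ x, f x ∂(Lap1' m b) = 1 / 2 * ∫ y, exp (-|y|) * f (m + b * y) := by
  unfold Lap1'
  have h_scale := Measure.integral_comp_mul_left (fun x ↦ exp (-|x| / b) * f (m + x)) b
  rw [abs_of_pos (inv_pos.2 hb), smul_eq_mul] at h_scale
  calc _ = ∫ x, (2 * b)⁻¹ * exp (-|x - m| / b) * f x := by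
        rw [integral_withDensity_eq_integral_toReal_smul (by fun_prop) (by simp)]
        congr with x
        rw [ENNReal.toReal_ofReal (by positivity), smul_eq_mul]
    _ = 1 / 2 * (b⁻¹ * ∫ x, exp (-|x| / b) * f (m + x)) := by
        rw [← integral_add_left_eq_self _ m, ← mul_assoc, ← integral_const_mul]
        congr with x
        rw [add_sub_cancel_left]
        ring
    _ = _ := by
        rw [← h_scale]
        congr! 4 with y
        rw [abs_mul, abs_of_pos hb, neg_div, mul_div_cancel_left₀ _ hb.ne']

lemma isProbabilityMeasure_Lap1' (hb : 0 < b) (m : ℝ) : IsProbabilityMeasure (Lap1' m b) := by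
  have h := integral_Lap1' hb m fun _ ↦ 1
  simp only [mul_one, integral_const, smul_eq_mul] at h
  rw [integral_comp_abs (f := fun y ↦ exp (-y)), integral_exp_neg_Ioi_zero] at h
  rw [isProbabilityMeasure_iff_real, h]
  norm_num

/-- The correlation under `Lap1' 0 b` of the likelihood ratios of `Lap1' m b` and `Lap1' m' b`. -/
noncomputable def laplaceCorr (b m m' : ℝ) : ℝ :=
  ∫ x, laplaceRatio b m x * laplaceRatio b m' x ∂(Lap1' 0 b)

lemma laplaceCorr_nonneg (b m m' : ℝ) : 0 ≤ laplaceCorr b m m' :=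
  integral_nonneg fun _ ↦ (mul_pos (laplaceRatio_pos _ _ _) (laplaceRatio_pos _ _ _)).le

lemma laplaceCorr_eq_integral (hb : 0 < b) (m m' : ℝ) :
    laplaceCorr b m m' = 1 / 2 * ∫ y, exp (|y| - |y - m / b| - |y - m' / b|) := by
  have h_scale (m y : ℝ) : laplaceRatio b m (b * y) = exp (|y| - |y - m / b|) := by
    rw [laplaceRatio, show b * y - m = b * (y - m / b) by field_simp, abs_mul, abs_mul,
      abs_of_pos hb, ← mul_sub, mul_div_cancel_left₀ _ hb.ne']
  rw [laplaceCorr, integral_Lap1' hb]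
  congr! 3 with y
  rw [zero_add, h_scale, h_scale, ← exp_add, ← exp_add]
  congr 1
  ring

lemma laplaceCorr_neg_neg (hb : 0 < b) (m m' : ℝ) :
    laplaceCorr b (-m) (-m') = laplaceCorr b m m' := by
  rw [laplaceCorr_eq_integral hb, laplaceCorr_eq_integral hb, ← integral_neg_eq_self]
  congr! 4 with y
  rw [abs_neg, neg_div, neg_div, neg_sub_neg, neg_sub_neg, abs_sub_comm _ y, abs_sub_comm _ y]

lemma laplaceCorr_self (hb : 0 < b) (m : ℝ) :
    laplaceCorr b m m = 2 / 3 * exp (|m| / b) + 1 / 3 * exp (-2 * (|m| / b)) := by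
  wlog hm : 0 ≤ m generalizing m
  · rw [← laplaceCorr_neg_neg hb, this (-m) (by linarith), abs_neg]
  rw [laplaceCorr_eq_integral hb, abs_of_nonneg hm]
  simp only [sub_sub, ← two_mul]
  rw [integral_exp_abs_sub_two_mul_abs_sub (by positivity)]
  ring

lemma laplaceCorr_neg_right (hb : 0 < b) (m : ℝ) :
    laplaceCorr b m (-m) = 2 * exp (-(|m| / b)) - exp (-2 * (|m| / b)) := by
  wlog hm : 0 ≤ m generalizing m
  · rw [← laplaceCorr_neg_neg hb, this (-m) (by linarith), abs_neg]
  rw [laplaceCorr_eq_integral hb, abs_of_nonneg hm]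
  simp only [neg_div, sub_neg_eq_add]
  rw [integral_exp_abs_sub_abs_sub_sub_abs_add (by positivity)]
  ring

end Laplace

section ScalarBounds

variable {s t : ℝ}

lemma exp_neg_le_one_sub_add_sq_div_two (ht : 0 ≤ t) : exp (-t) ≤ 1 - t + t ^ 2 / 2 := by
  have h_pos : 0 < 1 - t + t ^ 2 / 2 := by nlinarith [sq_nonneg (t - 1)]
  rw [exp_neg, inv_le_iff_one_le_mul₀ (exp_pos t)]
  calc 1 ≤ (1 - t + t ^ 2 / 2) * (1 + t + t ^ 2 / 2) := by nlinarith [sq_nonneg (t ^ 2)]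
    _ ≤ (1 - t + t ^ 2 / 2) * exp t := by gcongr; exact quadratic_le_exp_of_nonneg ht

lemma two_thirds_mul_exp_add_one_third_mul_exp_le (ht₀ : 0 ≤ t) (ht₁ : t ≤ 1) :
    2 / 3 * exp t + 1 / 3 * exp (-2 * t) ≤ 1 + t ^ 2 + t ^ 3 := by
  have h_exp : exp t ≤ 1 + t + t ^ 2 / 2 + 2 / 9 * t ^ 3 := by
    have h := exp_bound' ht₀ ht₁ (n := 3) (by norm_num)
    norm_num [Finset.sum_range_succ, Nat.factorial] at h
    linarith
  have h_exp_neg : exp (-2 * t) ≤ 1 - 2 * t + 2 * t ^ 2 := by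
    rw [neg_mul]
    linarith [exp_neg_le_one_sub_add_sq_div_two (t := 2 * t) (by positivity)]
  linarith [pow_nonneg ht₀ 3]

lemma two_mul_exp_neg_sub_exp_neg_two_mul_le (ht : 0 ≤ t) :
    2 * exp (-t) - exp (-2 * t) ≤ 1 - t ^ 2 + t ^ 3 := by
  have h_sq : 2 * exp (-t) - exp (-2 * t) = 1 - (1 - exp (-t)) ^ 2 := by
    rw [show -2 * t = -t + -t by ring, exp_add]
    ring
  rw [h_sq]
  rcases le_total t 1 with ht₁ | ht₁
  · have h : t - t ^ 2 / 2 ≤ 1 - exp (-t) := by linarith [exp_neg_le_one_sub_add_sq_div_two ht]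
    have h' := pow_le_pow_left₀ (by nlinarith : 0 ≤ t - t ^ 2 / 2) h 2
    linarith [sq_nonneg (t ^ 2)]
  · linarith [sq_nonneg (1 - exp (-t)), pow_le_pow_right₀ ht₁ (show 2 ≤ 3 by norm_num)]

lemma one_add_cube_mul_one_add_cube_add_sq_mul_sq_le (hs : 0 ≤ s) (ht : 0 ≤ t) (h : s + t ≤ 1) :
    (1 + s ^ 3) * (1 + t ^ 3) + s ^ 2 * t ^ 2 ≤ 1 + (s + t) ^ 3 := by
  have h_sq : s ^ 2 * t ^ 2 ≤ s ^ 2 * t := by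
    gcongr
    exact pow_le_of_le_one ht (by linarith) two_ne_zero
  have h_cube : s ^ 3 * t ^ 3 ≤ s ^ 2 * t :=
    mul_le_mul (pow_le_pow_of_le_one hs (by linarith) (by norm_num))
      (pow_le_of_le_one ht (by linarith) three_ne_zero) (by positivity) (by positivity)
  have h_mixed : 0 ≤ s ^ 2 * t + 3 * (s * t ^ 2) := by positivity
  linarith

end ScalarBounds

section BivariateLaplace

variable {b : ℝ}

/-- The likelihood ratio of `Lap2' m₁ m₂ b` with respect to `Lap2' 0 0 b`. -/
noncomputable def laplaceRatio₂ (b m₁ m₂ : ℝ) (z : ℝ × ℝ) : ℝ :=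
  laplaceRatio b m₁ z.1 * laplaceRatio b m₂ z.2

lemma laplaceRatio₂_nonneg (b m₁ m₂ : ℝ) : 0 ≤ laplaceRatio₂ b m₁ m₂ :=
  fun _ ↦ (mul_pos (laplaceRatio_pos _ _ _) (laplaceRatio_pos _ _ _)).le

lemma isProbabilityMeasure_Lap2' (hb : 0 < b) (m₁ m₂ : ℝ) :
    IsProbabilityMeasure (Lap2' m₁ m₂ b) := by
  have := isProbabilityMeasure_Lap1' hb
  unfold Lap2'
  infer_instance

lemma Lap2'_eq_withDensity_laplaceRatio₂ (hb : 0 < b) (m₁ m₂ : ℝ) :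
    Lap2' m₁ m₂ b =
      (Lap2' 0 0 b).withDensity fun z ↦ ENNReal.ofReal (laplaceRatio₂ b m₁ m₂ z) := by
  have := isProbabilityMeasure_Lap1' hb
  unfold Lap2'
  rw [Lap1'_eq_withDensity_laplaceRatio b m₁, Lap1'_eq_withDensity_laplaceRatio b m₂,
    prod_withDensity (by fun_prop) (by fun_prop)]
  congr with z
  rw [← ENNReal.ofReal_mul (laplaceRatio_pos _ _ _).le, laplaceRatio₂]

lemma memLp_laplaceRatio₂ (hb : 0 < b) (m₁ m₂ : ℝ) (p : ℝ≥0∞) :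
    MemLp (laplaceRatio₂ b m₁ m₂) p (Lap2' 0 0 b) := by
  have := isProbabilityMeasure_Lap2' hb 0 0
  refine .of_bound (by unfold laplaceRatio₂; fun_prop) (exp (|m₁| / b) * exp (|m₂| / b))
    (.of_forall fun z ↦ ?_)
  rw [norm_of_nonneg (laplaceRatio₂_nonneg b m₁ m₂ z)]
  exact mul_le_mul (laplaceRatio_le hb.le _ _) (laplaceRatio_le hb.le _ _)
    (laplaceRatio_pos _ _ _).le (exp_pos _).le

lemma integral_laplaceRatio₂_mul (hb : 0 < b) (m₁ m₂ m₁' m₂' : ℝ) :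
    ∫ z, laplaceRatio₂ b m₁ m₂ z * laplaceRatio₂ b m₁' m₂' z ∂(Lap2' 0 0 b) =
      laplaceCorr b m₁ m₁' * laplaceCorr b m₂ m₂' := by
  have := isProbabilityMeasure_Lap1' hb 0
  unfold laplaceCorr Lap2'
  rw [← integral_prod_mul]
  congr with z
  exact mul_mul_mul_comm _ _ _ _

lemma chiSqDiv_Lap2'_mixture_eq (hb : 0 < b) (m₁ m₂ : ℝ) :
    chiSqDiv ((1 / 2 : ℝ≥0∞) • Lap2' m₁ m₂ b + (1 / 2 : ℝ≥0∞) • Lap2' (-m₁) (-m₂) b)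
        (Lap2' 0 0 b) =
      (laplaceCorr b m₁ m₁ * laplaceCorr b m₂ m₂ +
        laplaceCorr b m₁ (-m₁) * laplaceCorr b m₂ (-m₂)) / 2 - 1 := by
  have := isProbabilityMeasure_Lap2' hb
  rw [chiSqDiv_half_smul_add_half_smul (laplaceRatio₂_nonneg b m₁ m₂)
    (laplaceRatio₂_nonneg b (-m₁) (-m₂)) (memLp_laplaceRatio₂ hb m₁ m₂ 2)
    (memLp_laplaceRatio₂ hb (-m₁) (-m₂) 2) (Lap2'_eq_withDensity_laplaceRatio₂ hb m₁ m₂)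
    (Lap2'_eq_withDensity_laplaceRatio₂ hb (-m₁) (-m₂))]
  simp only [integral_laplaceRatio₂_mul hb, laplaceCorr_neg_neg hb]
  ring

lemma chiSqDiv_Lap2'_mixture_le (hb : 0 < b) {m₁ m₂ : ℝ} (hm : (|m₁| + |m₂|) / b ≤ 1) :
    chiSqDiv ((1 / 2 : ℝ≥0∞) • Lap2' m₁ m₂ b + (1 / 2 : ℝ≥0∞) • Lap2' (-m₁) (-m₂) b)
        (Lap2' 0 0 b) ≤ ((|m₁| + |m₂|) / b) ^ 3 := by
  set s := |m₁| / b with hs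
  set t := |m₂| / b with ht
  have hs₀ : 0 ≤ s := by positivity
  have ht₀ : 0 ≤ t := by positivity
  rw [add_div, ← hs, ← ht] at hm ⊢
  have h_self₁ : laplaceCorr b m₁ m₁ ≤ 1 + s ^ 2 + s ^ 3 :=
    (laplaceCorr_self hb m₁).trans_le
      (two_thirds_mul_exp_add_one_third_mul_exp_le hs₀ (by linarith))
  have h_self₂ : laplaceCorr b m₂ m₂ ≤ 1 + t ^ 2 + t ^ 3 :=
    (laplaceCorr_self hb m₂).trans_le
      (two_thirds_mul_exp_add_one_third_mul_exp_le ht₀ (by linarith))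
  have h_neg₁ : laplaceCorr b m₁ (-m₁) ≤ 1 - s ^ 2 + s ^ 3 :=
    (laplaceCorr_neg_right hb m₁).trans_le (two_mul_exp_neg_sub_exp_neg_two_mul_le hs₀)
  have h_neg₂ : laplaceCorr b m₂ (-m₂) ≤ 1 - t ^ 2 + t ^ 3 :=
    (laplaceCorr_neg_right hb m₂).trans_le (two_mul_exp_neg_sub_exp_neg_two_mul_le ht₀)
  rw [chiSqDiv_Lap2'_mixture_eq hb]
  calc _ ≤ ((1 + s ^ 2 + s ^ 3) * (1 + t ^ 2 + t ^ 3) +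
          (1 - s ^ 2 + s ^ 3) * (1 - t ^ 2 + t ^ 3)) / 2 - 1 := by
        have h_self := mul_le_mul h_self₁ h_self₂ (laplaceCorr_nonneg b m₂ m₂) (by positivity)
        have h_neg := mul_le_mul h_neg₁ h_neg₂ (laplaceCorr_nonneg b m₂ (-m₂))
          ((laplaceCorr_nonneg b m₁ (-m₁)).trans h_neg₁)
        gcongr
    _ = (1 + s ^ 3) * (1 + t ^ 3) + s ^ 2 * t ^ 2 - 1 := by ring
    _ ≤ (s + t) ^ 3 := by
        linarith [one_add_cube_mul_one_add_cube_add_sq_mul_sq_le hs₀ ht₀ hm]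

end BivariateLaplace

lemma exp_one_sq_mem_Icc : exp 1 ^ 2 ∈ Set.Icc 7 7.4 :=
  ⟨by nlinarith [exp_one_gt_d9], by nlinarith [exp_one_lt_d9, exp_pos 1]⟩

theorem chiSq_laplace_mixture_le_general (α μ₁ μ₂ : ℝ) (hα : 0 < α)
    (hμ : α * (|μ₁| + |μ₂|) ≤ 1) :
    (∫ x, ((((1 / 2 : ℝ≥0∞) • Lap2' μ₁ μ₂ α⁻¹ + (1 / 2 : ℝ≥0∞) • Lap2' (-μ₁) (-μ₂) α⁻¹).rnDeriv
              (Lap2' 0 0 α⁻¹) x).toReal - 1) ^ 2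
      ∂(Lap2' 0 0 α⁻¹))
      ≤ Real.exp 1 ^ 2 * α ^ 4 / 4 * (|μ₁| + |μ₂|) ^ 4
          + 2 * Real.exp 1 ^ 2 * α ^ 3 * (|μ₁| + |μ₂|) ^ 3 ∧
    Real.exp 1 ^ 2 * α ^ 4 / 4 * (|μ₁| + |μ₂|) ^ 4
          + 2 * Real.exp 1 ^ 2 * α ^ 3 * (|μ₁| + |μ₂|) ^ 3
      ≤ 16.7 * α ^ 3 * (|μ₁| + |μ₂|) ^ 3 := by
  set s := |μ₁| + |μ₂| with hs
  have h_scale : s / α⁻¹ = α * s := by rw [div_inv_eq_mul, mul_comm]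
  have h_chiSq := chiSqDiv_Lap2'_mixture_le (inv_pos.2 hα) (h_scale.trans_le hμ)
  rw [← hs, h_scale, mul_pow] at h_chiSq
  obtain ⟨he_lower, he_upper⟩ := exp_one_sq_mem_Icc
  have h_cube : 0 ≤ α ^ 3 * s ^ 3 := by positivity
  have h_quartic : α ^ 4 * s ^ 4 ≤ α ^ 3 * s ^ 3 := by
    simpa only [mul_pow] using pow_le_pow_of_le_one (by positivity) hμ (show 3 ≤ 4 by norm_num)
  constructor
  · calc _ ≤ α ^ 3 * s ^ 3 := h_chiSq
      _ ≤ 2 * exp 1 ^ 2 * (α ^ 3 * s ^ 3) := le_mul_of_one_le_left h_cube (by linarith)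
      _ ≤ exp 1 ^ 2 * α ^ 4 / 4 * s ^ 4 + 2 * exp 1 ^ 2 * α ^ 3 * s ^ 3 := by
        rw [← mul_assoc]
        exact le_add_of_nonneg_left (by positivity)
  · calc exp 1 ^ 2 * α ^ 4 / 4 * s ^ 4 + 2 * exp 1 ^ 2 * α ^ 3 * s ^ 3
        = exp 1 ^ 2 / 4 * (α ^ 4 * s ^ 4) + 2 * exp 1 ^ 2 * (α ^ 3 * s ^ 3) := by ring
      _ ≤ exp 1 ^ 2 / 4 * (α ^ 3 * s ^ 3) + 2 * exp 1 ^ 2 * (α ^ 3 * s ^ 3) := by gcongr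
      _ = 9 / 4 * exp 1 ^ 2 * (α ^ 3 * s ^ 3) := by ring
      _ ≤ 16.7 * (α ^ 3 * s ^ 3) := by gcongr; linarith
      _ = 16.7 * α ^ 3 * s ^ 3 := by ring

/-- for `α ∈ (0,1]` and `‖μ‖₁ ≤ 1`, the chi-square divergence
`χ²(P₊₋, P₀) = ∫ (dP₊₋/dP₀ − 1)² dP₀` between the symmetric two-component Laplace
mixture `P₊₋ = ½ Lap₂(μ, α⁻¹) + ½ Lap₂(−μ, α⁻¹)` and the centered Laplace
`P₀ = Lap₂(0, α⁻¹)` satisfies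
`χ²(P₊₋, P₀) ≤ (e²α⁴/4) ‖μ‖₁⁴ + 2e²α³ ‖μ‖₁³ ≤ 16.7 α³ ‖μ‖₁³`. -/
theorem chiSq_laplace_mixture_le (α μ₁ μ₂ : ℝ) (hα : α ∈ Set.Ioc (0 : ℝ) 1)
    (hμ : |μ₁| + |μ₂| ≤ 1) :
    (∫ x, ((((1 / 2 : ℝ≥0∞) • Lap2' μ₁ μ₂ α⁻¹ + (1 / 2 : ℝ≥0∞) • Lap2' (-μ₁) (-μ₂) α⁻¹).rnDeriv
              (Lap2' 0 0 α⁻¹) x).toReal - 1) ^ 2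
      ∂(Lap2' 0 0 α⁻¹))
      ≤ Real.exp 1 ^ 2 * α ^ 4 / 4 * (|μ₁| + |μ₂|) ^ 4
          + 2 * Real.exp 1 ^ 2 * α ^ 3 * (|μ₁| + |μ₂|) ^ 3 ∧
    Real.exp 1 ^ 2 * α ^ 4 / 4 * (|μ₁| + |μ₂|) ^ 4
          + 2 * Real.exp 1 ^ 2 * α ^ 3 * (|μ₁| + |μ₂|) ^ 3
      ≤ 16.7 * α ^ 3 * (|μ₁| + |μ₂|) ^ 3 :=
  chiSq_laplace_mixture_le_general α μ₁ μ₂ hα.1 (mul_le_one₀ hα.2 (by positivity) hμ)
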